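/- Let A be the 4×4 real skew-symmetric matrix with above-diagonal entries a_{12} = 0, a_{13} = 0, a_{14} = 2, a_{23} = 0, a_{24} = 0, a_{34} = −2 (and a_{ji} = −a_{ij}). Then M_{j,k}(A) ≥ 0 for all 1 ≤ j ≤ k ≤ 3, yet A does not lie in the Euclidean closure of S_4^{>0} in the space of 4×4 real matrices. In particular, nonnegativity of all the minors M_{j,k} does not suffice for total nonnegativity. -/

import Mathlib

noncomputable section

open Matrix

/-- `N = n(n-1)/2`, the number of parameters. -/
def Npar (n : ℕ) : ℕ := n * (n - 1) / 2

/-- The decreasing run `a, a-1, …, b` (empty if `b > a`). -/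
def decRun (a b : ℕ) : List ℕ := (List.range' b (a + 1 - b)).reverse

/-- The index sequence `(i_1, …, i_N)`: for `m = 1, …, ⌊n/2⌋` (here `m` is 0-based, so
`m+1` is the 1-based block index), concatenate `n`, the run `n-2, …, 2(m+1)-1`, and the
run `n-1, …, 2(m+1)`. -/
def wordD (n : ℕ) : List ℕ :=
  ((List.range (n / 2)).map (fun m =>
    n :: (decRun (n - 2) (2 * m + 1) ++ decRun (n - 1) (2 * m + 2)))).flatten

/-- The matrix `x_i(t)` (index `i` is 1-based, matrix positions are 1-based in the paper,
0-based here). -/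
def xMat (n : ℕ) (i : ℕ) (t : ℝ) : Matrix (Fin (2 * n)) (Fin (2 * n)) ℝ :=
  Matrix.of fun p q =>
    (if (p : ℕ) = (q : ℕ) then 1 else 0) +
    (if i < n then
        (if (p : ℕ) + 1 = i ∧ (q : ℕ) + 1 = i + 1 then t else 0)
      + (if (p : ℕ) + 1 = n + i + 1 ∧ (q : ℕ) + 1 = n + i then -t else 0)
     else
        (if (p : ℕ) + 1 = n - 1 ∧ (q : ℕ) + 1 = 2 * n then t else 0)
      + (if (p : ℕ) + 1 = n ∧ (q : ℕ) + 1 = 2 * n - 1 then -t else 0))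

/-- The product `x_{i_1}(t_1) ⋯ x_{i_N}(t_N)`; the parameter `t l` plays the role of
`t_{l+1}`. -/
def prodX (n : ℕ) (t : ℕ → ℝ) : Matrix (Fin (2 * n)) (Fin (2 * n)) ℝ :=
  ((List.range (Npar n)).map (fun l => xMat n ((wordD n).getD l 0) (t l))).prod

/-- The first block `X₁(t)` of the first `n` rows of the product. -/
def X1 (n : ℕ) (t : ℕ → ℝ) : Matrix (Fin n) (Fin n) ℝ :=
  Matrix.of fun p q =>
    prodX n t ⟨(p : ℕ), by have := p.isLt; omega⟩ ⟨(q : ℕ), by have := q.isLt; omega⟩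

/-- The second block `X₂(t)` of the first `n` rows of the product. -/
def X2 (n : ℕ) (t : ℕ → ℝ) : Matrix (Fin n) (Fin n) ℝ :=
  Matrix.of fun p q =>
    prodX n t ⟨(p : ℕ), by have := p.isLt; omega⟩ ⟨n + (q : ℕ), by have := q.isLt; omega⟩

/-- The skew-symmetric matrix `A(t) = X₁(t)⁻¹ · X₂(t)`. -/
def Amat (n : ℕ) (t : ℕ → ℝ) : Matrix (Fin n) (Fin n) ℝ := (X1 n t)⁻¹ * X2 n t

/-- The set `S_n^{>0}` of totally positive skew-symmetric matrices. -/
def Spos (n : ℕ) : Set (Matrix (Fin n) (Fin n) ℝ) :=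
  { A | ∃ t : ℕ → ℝ, (∀ i < Npar n, 0 < t i) ∧ A = Amat n t }

/-- The signed minor `M_{j,k}(A)`: `(-1)^{jk}` times the determinant of the submatrix of `A`
with (1-based) rows `{1,…,n-k-1} ∪ {n-k+j,…,n}` and columns `{1,…,n-j}`. -/
def Mminor (n j k : ℕ) (A : Matrix (Fin n) (Fin n) ℝ) : ℝ :=
  (-1 : ℝ) ^ (j * k) *
    Matrix.det (Matrix.of fun (p q : Fin (n - j)) =>
      A (if (p : ℕ) < n - k - 1
          then ⟨(p : ℕ), by have := p.isLt; omega⟩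
          else ⟨(p : ℕ) + j, by have := p.isLt; omega⟩)
        ⟨(q : ℕ), by have := q.isLt; omega⟩)

/-- The Pfaffian of an `m × m` matrix (intended for `m` even):
`Pf(B) = (1/(2^{m/2} (m/2)!)) Σ_σ sgn(σ) Π_i B_{σ(2i-1), σ(2i)}`. -/
def Pfaff {m : ℕ} (B : Matrix (Fin m) (Fin m) ℝ) : ℝ :=
  (1 / ((2 : ℝ) ^ (m / 2) * (Nat.factorial (m / 2) : ℝ))) *
    ∑ σ : Equiv.Perm (Fin m), ((Equiv.Perm.sign σ : ℤ) : ℝ) *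
      ∏ i : Fin (m / 2),
        B (σ ⟨2 * (i : ℕ), by have := i.isLt; omega⟩)
          (σ ⟨2 * (i : ℕ) + 1, by have := i.isLt; omega⟩)

/-- `Pf_I(A)`: the Pfaffian of the submatrix of `A` with rows and columns indexed by `I`
in increasing order. -/
def PfI {n : ℕ} (A : Matrix (Fin n) (Fin n) ℝ) (I : Finset (Fin n)) : ℝ :=
  Pfaff (Matrix.of fun (p q : Fin I.card) =>
    A ((I.orderIsoOfFin rfl p : Fin n)) ((I.orderIsoOfFin rfl q : Fin n)))

/-- `sgn(I,[n]) = (-1)^{(Σ_{i∈I} i) - |I|(|I|+1)/2}` (the elements of `I` are 1-based, so a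
0-based element `i` contributes `i+1`; the natural subtraction agrees with the integer one
since the sum of `|I|` distinct positive integers is at least `|I|(|I|+1)/2`). -/
def sgnSet {n : ℕ} (I : Finset (Fin n)) : ℝ :=
  (-1 : ℝ) ^ ((∑ i ∈ I, ((i : ℕ) + 1)) - I.card * (I.card + 1) / 2)

/-- The block matrix `[Id_n | A]`. -/
def IdA {n : ℕ} (A : Matrix (Fin n) (Fin n) ℝ) : Matrix (Fin n) (Fin (2 * n)) ℝ :=
  Matrix.of fun p q =>
    if h : (q : ℕ) < n then (if (p : ℕ) = (q : ℕ) then 1 else 0)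
    else A p ⟨(q : ℕ) - n, by have := q.isLt; omega⟩

/-- The full word `(j_1, …, j_{2N})`: `1, 2,1, 3,2,1, …, n-1,…,1` followed by `(i_1,…,i_N)`. -/
def wordFull (n : ℕ) : List ℕ :=
  (((List.range n).map (fun r => decRun r 1)).flatten) ++ wordD n

/-- `z(ε) = x_{j_1}(ε) ⋯ x_{j_{2N}}(ε)`. -/
def zeps (n : ℕ) (ε : ℝ) : Matrix (Fin (2 * n)) (Fin (2 * n)) ℝ :=
  ((wordFull n).map (fun i => xMat n i ε)).prod

/-- `Z(ε) = z(ε)ᵀ · z(ε)`. -/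
def Zeps (n : ℕ) (ε : ℝ) : Matrix (Fin (2 * n)) (Fin (2 * n)) ℝ :=
  (zeps n ε)ᵀ * zeps n ε

/-- First block `Y₁(ε)` of `[Id_n | A] · Z(ε)`. -/
def Y1 {n : ℕ} (A : Matrix (Fin n) (Fin n) ℝ) (ε : ℝ) : Matrix (Fin n) (Fin n) ℝ :=
  Matrix.of fun p q => (IdA A * Zeps n ε) p ⟨(q : ℕ), by have := q.isLt; omega⟩

/-- Second block `Y₂(ε)` of `[Id_n | A] · Z(ε)`. -/
def Y2 {n : ℕ} (A : Matrix (Fin n) (Fin n) ℝ) (ε : ℝ) : Matrix (Fin n) (Fin n) ℝ :=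
  Matrix.of fun p q => (IdA A * Zeps n ε) p ⟨n + (q : ℕ), by have := q.isLt; omega⟩

/-- The simple generators `s_i` of the Weyl group `W` of `SO(2n)`, as permutations of
`{1,…,2n}` (0-based here): for `1 ≤ i ≤ n-1`, `s_i = (i,i+1)(n+i,n+i+1)`; for `i = n`,
`s_n = (n,2n-1)(n-1,2n)`. -/
def sGen (n : ℕ) (i : ℕ) : Equiv.Perm (Fin (2 * n)) :=
  if h : 1 ≤ i ∧ i ≤ n - 1 ∧ 2 ≤ n then
    Equiv.swap ⟨i - 1, by omega⟩ ⟨i, by omega⟩ *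
      Equiv.swap ⟨n + i - 1, by omega⟩ ⟨n + i, by omega⟩
  else if h2 : i = n ∧ 2 ≤ n then
    Equiv.swap ⟨n - 1, by omega⟩ ⟨2 * n - 2, by omega⟩ *
      Equiv.swap ⟨n - 2, by omega⟩ ⟨2 * n - 1, by omega⟩
  else 1

/-- Membership in the Weyl group `W`: `σ(n+i) ≡ n + σ(i) (mod 2n)` for all `1 ≤ i ≤ n`,
and the number of `i ∈ {1,…,n}` with `σ(i) > n` is even. (All positions are 0-based; a
0-based value `v` corresponds to the 1-based value `v+1`.) -/
def inW (n : ℕ) (σ : Equiv.Perm (Fin (2 * n))) : Prop :=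
  (∀ i : Fin n,
    ((σ ⟨n + (i : ℕ), by have := i.isLt; omega⟩ : Fin (2 * n)) : ℕ)
      ≡ n + ((σ ⟨(i : ℕ), by have := i.isLt; omega⟩ : Fin (2 * n)) : ℕ) [MOD 2 * n]) ∧
  Even (Finset.univ.filter (fun i : Fin n =>
    n ≤ ((σ ⟨(i : ℕ), by have := i.isLt; omega⟩ : Fin (2 * n)) : ℕ))).card

/-- `I_w = {i ∈ {1,…,n} : w(i) > n}`, as a finset of `Fin n` (0-based). -/
def Iset (n : ℕ) (σ : Equiv.Perm (Fin (2 * n))) : Finset (Fin n) :=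
  Finset.univ.filter (fun i : Fin n =>
    n ≤ ((σ ⟨(i : ℕ), by have := i.isLt; omega⟩ : Fin (2 * n)) : ℕ))

/-- The parabolic subgroup `W_{[n-1]}` generated by `s_1, …, s_{n-1}`. -/
def Wpar (n : ℕ) : Subgroup (Equiv.Perm (Fin (2 * n))) :=
  Subgroup.closure { σ | ∃ i, 1 ≤ i ∧ i ≤ n - 1 ∧ σ = sGen n i }

/-- The standard basis vector `e_i` of `ℝ^{2n}` (with `i : Fin n` 0-based, sitting in
position `i` of the first block). -/
def evec (n : ℕ) (i : Fin n) : Fin (2 * n) → ℝ :=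
  Pi.single ⟨(i : ℕ), by have := i.isLt; omega⟩ 1

/-- The standard basis vector `f_j` of `ℝ^{2n}` (position `n + j`). -/
def fvec (n : ℕ) (j : Fin n) : Fin (2 * n) → ℝ :=
  Pi.single ⟨n + (j : ℕ), by have := j.isLt; omega⟩ 1

/-- `f = ι(f_1)⋯ι(f_n)` in the Clifford algebra. -/
def fElt {n : ℕ} (Q : QuadraticForm ℝ (Fin (2 * n) → ℝ)) : CliffordAlgebra Q :=
  (List.ofFn (fun j : Fin n => CliffordAlgebra.ι Q (fvec n j))).prod

/-- `e_S = ι(e_{l_1})⋯ι(e_{l_s})` where `l_1 < ⋯ < l_s` enumerates `S`. -/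
def eProd {n : ℕ} (Q : QuadraticForm ℝ (Fin (2 * n) → ℝ)) (S : Finset (Fin n)) :
    CliffordAlgebra Q :=
  ((S.sort (· ≤ ·)).map (fun l => CliffordAlgebra.ι Q (evec n l))).prod

/-- `h = Π_{i=1}^n ι(e_i + Σ_j A_{ij} f_j)` (product in increasing order of `i`). -/
def hElt {n : ℕ} (Q : QuadraticForm ℝ (Fin (2 * n) → ℝ)) (A : Matrix (Fin n) (Fin n) ℝ) :
    CliffordAlgebra Q :=
  (List.ofFn (fun i : Fin n =>
    CliffordAlgebra.ι Q (evec n i + ∑ j : Fin n, A i j • fvec n j))).prod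

/-- The sorted list of the (1-based) elements of `S ⊆ {1,…,n}`. -/
def valsOf {n : ℕ} (S : Finset (Fin n)) : List ℕ :=
  (S.sort (· ≤ ·)).map (fun i => (i : ℕ) + 1)

/-- The word `w_1 w_2 ⋯ w_r` where
`w_m = s_n (s_{n-2}⋯s_{i_{2m-1}}) (s_{n-1}⋯s_{i_{2m}})` and `vals` lists `i_1 < i_2 < ⋯`
(1-based); `m` is 0-based here. -/
def uWord (n r : ℕ) (vals : List ℕ) : List ℕ :=
  ((List.range r).map (fun m =>
    n :: (decRun (n - 2) (vals.getD (2 * m) 0) ++ decRun (n - 1) (vals.getD (2 * m + 1) 0)))).flatten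

/-- The permutation `u = w_1 w_2 ⋯ w_r`. -/
def uPerm (n r : ℕ) (vals : List ℕ) : Equiv.Perm (Fin (2 * n)) :=
  ((uWord n r vals).map (sGen n)).prod

/-- `L = r + Σ_{m=1}^{r} ((n-1-i_{2m-1}) + (n-i_{2m}))`. -/
def Lval (n r : ℕ) (vals : List ℕ) : ℕ :=
  r + ∑ m ∈ Finset.range r, ((n - 1 - vals.getD (2 * m) 0) + (n - vals.getD (2 * m + 1) 0))

/-!
Only the row of `x_{i_1}(t_1) ⋯ x_{i_N}(t_N)` indexed by `n` matters. It starts as `e_n`, and in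
the hyperbolic basis `e_1, …, e_n, f_1, …, f_n` right multiplication by `x_i(t)` fixes `e_n` for
`i < n`, sends it to `e_n - t f_{n-1}` for `i = n`, and sends `f_j` with `j < n` to `f_j` or
`f_j - t f_{j-1}`. Hence this row always is `e_n - c f_{n-1} + (terms in f_1, …, f_{n-2})` with
`c ≥ 0`. As `X₁` is unitriangular, it is also the last row of `[Id | A]`, so that
`a_{n,n-1} ≤ 0` on the closure of `S_n^{>0}`, whereas the given matrix has `a_{43} = 2`.

The given matrix is supported on its last row and column. A minor `M_{j,k}` of size at least two
avoids the last column and starts with a row other than the last, so it vanishes; the only other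
minor is `M_{3,3} = -a_{41} = 2`.
-/

section Minors

variable {n : ℕ}

theorem Mminor_eq_zero_of_forall_lt_pred {j k : ℕ} {A : Matrix (Fin n) (Fin n) ℝ}
    (hA : ∀ p q : Fin n, (p : ℕ) < n - 1 → (q : ℕ) < n - 1 → A p q = 0)
    (hj : 1 ≤ j) (hjn : j < n - 1) : Mminor n j k A = 0 := by
  have first_row_eq_zero := det_eq_zero_of_row_eq_zero
    (A := Matrix.of fun p q : Fin (n - j) =>
      A (if (p : ℕ) < n - k - 1 then ⟨p, by omega⟩ else ⟨p + j, by omega⟩) ⟨q, by omega⟩)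
    ⟨0, by omega⟩ fun q => hA _ _ (by split_ifs <;> dsimp only <;> omega) (by dsimp only; omega)
  rw [Mminor, first_row_eq_zero, mul_zero]

theorem Mminor_self (A : Matrix (Fin (n + 1)) (Fin (n + 1)) ℝ) :
    Mminor (n + 1) n n A = (-1) ^ (n * n) * A (Fin.last n) 0 := by
  rw [Mminor, det_eq_elem_of_card_eq_one (by simp) ⟨0, by omega⟩]
  simp [Fin.last]

end Minors

section Word

theorem length_decRun (a b : ℕ) : (decRun a b).length = a + 1 - b := by
  simp [decRun]

theorem le_of_mem_decRun {a b i : ℕ} (hi : i ∈ decRun a b) : b ≤ i := by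
  rw [decRun, List.mem_reverse, List.mem_range'_1] at hi
  exact hi.1

theorem one_le_of_mem_wordD {n i : ℕ} (hi : i ∈ wordD n) : 1 ≤ i := by
  obtain ⟨block, hblock, hi⟩ := List.mem_flatten.1 hi
  obtain ⟨m, hm, rfl⟩ := List.mem_map.1 hblock
  rw [List.mem_range] at hm
  rcases List.mem_cons.1 hi with rfl | hi
  · omega
  · rcases List.mem_append.1 hi with hi | hi <;>
      have := le_of_mem_decRun hi <;> omega

theorem length_wordD_block {n m : ℕ} (hm : 2 * m + 2 ≤ n) :
    (n :: (decRun (n - 2) (2 * m + 1) ++ decRun (n - 1) (2 * m + 2))).length =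
      2 * (n - 2 * m - 2) + 1 := by
  rw [List.length_cons, List.length_append, length_decRun, length_decRun]
  omega

theorem sum_length_wordD_blocks {n k : ℕ} (hk : 2 * k ≤ n) :
    ((List.range k).map fun m => 2 * (n - 2 * m - 2) + 1).sum = k * (2 * n - 2 * k - 1) := by
  induction k with
  | zero => simp
  | succ k ih =>
    obtain ⟨d, rfl⟩ := Nat.exists_eq_add_of_le hk
    have tail_width : 2 * (k + 1) + d - 2 * k - 2 = d := by omega
    have factor_before : 2 * (2 * (k + 1) + d) - 2 * k - 1 = 2 * k + 2 * d + 3 := by omega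
    have factor_after : 2 * (2 * (k + 1) + d) - 2 * (k + 1) - 1 = 2 * k + 2 * d + 1 := by omega
    rw [List.range_succ, List.map_append, List.sum_append, ih (by omega), List.map_singleton,
      List.sum_singleton, tail_width, factor_before, factor_after]
    ring

theorem half_mul_eq_Npar (n : ℕ) : n / 2 * (2 * n - 2 * (n / 2) - 1) = Npar n := by
  rw [Npar]
  rcases n.even_or_odd' with ⟨k, rfl | rfl⟩
  · rw [Nat.mul_div_cancel_left k two_pos, mul_assoc, Nat.mul_div_cancel_left _ two_pos]
    congr 1
    omega
  · have half : (2 * k + 1) / 2 = k := by omega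
    have factor : 2 * (2 * k + 1) - 2 * k - 1 = 2 * k + 1 := by omega
    rw [half, factor, Nat.add_sub_cancel, mul_left_comm, Nat.mul_div_cancel_left _ two_pos,
      mul_comm]

theorem length_wordD (n : ℕ) : (wordD n).length = Npar n := by
  rw [wordD, List.length_flatten, List.map_map, ← half_mul_eq_Npar,
    ← sum_length_wordD_blocks (by omega : 2 * (n / 2) ≤ n)]
  refine congrArg List.sum (List.map_congr_left fun m hm => length_wordD_block ?_)
  rw [List.mem_range] at hm
  omega

/- The default value `0` of `getD` has to be excluded: unlike the paper's matrices, `xMat n 0 t` has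
a nonzero entry in the lower left block. -/
theorem one_le_wordD_getD {n l : ℕ} (hl : l < Npar n) : 1 ≤ (wordD n).getD l 0 := by
  rw [← length_wordD] at hl
  rw [List.getD_eq_getElem _ _ hl]
  exact one_le_of_mem_wordD (List.getElem_mem hl)

end Word

section RowAction

theorem vecMul_matrix_single {ι κ R : Type*} [Fintype ι] [DecidableEq ι] [DecidableEq κ]
    [NonUnitalNonAssocSemiring R] (v : ι → R) (a : ι) (b : κ) (s : R) :
    v ᵥ* single a b s = Pi.single b (v a * s) := by
  ext q
  simp [vecMul, dotProduct, single_apply, Pi.single_apply, ite_and, eq_comm]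

variable {n i : ℕ}

theorem xMat_succ_of_lt (hi : i + 1 < n) (s : ℝ) :
    xMat n (i + 1) s = 1 + single ⟨i, by omega⟩ ⟨i + 1, by omega⟩ s -
      single ⟨n + i + 1, by omega⟩ ⟨n + i, by omega⟩ s := by
  ext p q
  simp only [xMat, of_apply, hi, Matrix.sub_apply, Matrix.add_apply, one_apply, single_apply,
    Fin.ext_iff]
  grind

theorem xMat_of_le (hn : 2 ≤ n) (hi : n ≤ i) (s : ℝ) :
    xMat n i s = 1 + single ⟨n - 2, by omega⟩ ⟨2 * n - 1, by omega⟩ s -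
      single ⟨n - 1, by omega⟩ ⟨2 * n - 2, by omega⟩ s := by
  ext p q
  simp only [xMat, of_apply, hi.not_gt, Matrix.sub_apply, Matrix.add_apply, one_apply, single_apply,
    Fin.ext_iff]
  grind

theorem vecMul_xMat_succ_of_lt (hi : i + 1 < n) (s : ℝ) (v : Fin (2 * n) → ℝ) :
    v ᵥ* xMat n (i + 1) s = v + Pi.single ⟨i + 1, by omega⟩ (v ⟨i, by omega⟩ * s) -
      Pi.single ⟨n + i, by omega⟩ (v ⟨n + i + 1, by omega⟩ * s) := by
  simp only [xMat_succ_of_lt hi, vecMul_sub, vecMul_add, vecMul_one, vecMul_matrix_single]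

theorem vecMul_xMat_of_le (hn : 2 ≤ n) (hi : n ≤ i) (s : ℝ) (v : Fin (2 * n) → ℝ) :
    v ᵥ* xMat n i s = v + Pi.single ⟨2 * n - 1, by omega⟩ (v ⟨n - 2, by omega⟩ * s) -
      Pi.single ⟨2 * n - 2, by omega⟩ (v ⟨n - 1, by omega⟩ * s) := by
  simp only [xMat_of_le hn hi, vecMul_sub, vecMul_add, vecMul_one, vecMul_matrix_single]

theorem vecMul_list_prod_induction {ι R α : Type*} [Fintype ι] [DecidableEq ι] [Semiring R]
    {P : (ι → R) → Prop} {f : α → Matrix ι ι R} {L : List α}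
    (hstep : ∀ a ∈ L, ∀ v, P v → P (v ᵥ* f a)) {v : ι → R} (hv : P v) :
    P (v ᵥ* (L.map f).prod) := by
  induction L generalizing v with
  | nil => simpa using hv
  | cons a L ih =>
    rw [List.map_cons, List.prod_cons, ← vecMul_vecMul]
    exact ih (fun b hb => hstep b (List.mem_cons_of_mem a hb)) (hstep a List.mem_cons_self v hv)

theorem prodX_row_induction {t : ℕ → ℝ} {P : (Fin (2 * n) → ℝ) → Prop} (p : Fin (2 * n))
    (hstart : P (Pi.single p 1))
    (hstep : ∀ l < Npar n, ∀ i, 1 ≤ i → ∀ v, P v → P (v ᵥ* xMat n i (t l))) :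
    P (prodX n t p) := by
  rw [← row_apply' (prodX n t), ← single_one_vecMul, prodX]
  refine vecMul_list_prod_induction (fun l hl => ?_) hstart
  rw [List.mem_range] at hl
  exact hstep l hl _ (one_le_wordD_getD hl)

end RowAction

section LeadingOne

/-- The row vector `v` vanishes before position `p` and has the entry `1` there. A square matrix is
upper unitriangular exactly when this holds for its `p`-th row, for every `p`. -/
def HasLeadingOne {ι R : Type*} [LT ι] [Zero R] [One R] (p : ι) (v : ι → R) : Prop :=
  v p = 1 ∧ ∀ q < p, v q = 0

theorem hasLeadingOne_single {ι R : Type*} [Preorder ι] [DecidableEq ι] [Zero R] [One R] (p : ι) :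
    HasLeadingOne p (Pi.single p (1 : R)) :=
  ⟨Pi.single_eq_same p 1, fun _ hq => Pi.single_eq_of_ne hq.ne 1⟩

theorem det_eq_one_of_hasLeadingOne {ι R : Type*} [Fintype ι] [LinearOrder ι] [CommRing R]
    {M : Matrix ι ι R} (hM : ∀ p, HasLeadingOne p (M p)) : M.det = 1 := by
  rw [det_of_isUpperTriangular fun p q hqp => (hM p).2 q hqp]
  exact Finset.prod_eq_one fun p _ => (hM p).1

variable {n : ℕ}

theorem HasLeadingOne.vecMul_xMat (hn : 2 ≤ n) {p : Fin (2 * n)} (hp : (p : ℕ) < n)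
    {v : Fin (2 * n) → ℝ} (hv : HasLeadingOne p v) {i : ℕ} (hi : 1 ≤ i) (s : ℝ) :
    HasLeadingOne p (v ᵥ* xMat n i s) := by
  suffices unchanged : ∀ q ≤ p, (v ᵥ* xMat n i s) q = v q from
    ⟨(unchanged p le_rfl).trans hv.1, fun q hq => (unchanged q hq.le).trans (hv.2 q hq)⟩
  intro q hq
  rw [Fin.le_def] at hq
  rcases lt_or_ge i n with hin | hni
  · obtain ⟨i, rfl⟩ := Nat.exists_eq_add_of_le' hi
    rw [vecMul_xMat_succ_of_lt hin]
    have source_eq_zero : i < p → v ⟨i, by omega⟩ = 0 := fun hip => hv.2 _ hip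
    simp only [Pi.sub_apply, Pi.add_apply, Pi.single_apply, Fin.ext_iff]
    grind
  · rw [vecMul_xMat_of_le hn hni, Pi.sub_apply, Pi.add_apply, Pi.single_eq_of_ne (by grind),
      Pi.single_eq_of_ne (by grind), add_zero, sub_zero]

theorem hasLeadingOne_prodX (hn : 2 ≤ n) (t : ℕ → ℝ) {p : Fin (2 * n)} (hp : (p : ℕ) < n) :
    HasLeadingOne p (prodX n t p) :=
  prodX_row_induction p (hasLeadingOne_single p) fun l _ _ hi _ hv => hv.vecMul_xMat hn hp hi (t l)

theorem hasLeadingOne_X1 (hn : 2 ≤ n) (t : ℕ → ℝ) (p : Fin n) : HasLeadingOne p (X1 n t p) := by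
  have hrow := hasLeadingOne_prodX hn t (p := ⟨p, by omega⟩) p.isLt
  exact ⟨hrow.1, fun q hq => hrow.2 ⟨q, by omega⟩ hq⟩

end LeadingOne

section LastRow

variable {n : ℕ}

theorem X1_mul_Amat (hn : 2 ≤ n) (t : ℕ → ℝ) : X1 n t * Amat n t = X2 n t := by
  have hdet : (X1 n t).det = 1 := det_eq_one_of_hasLeadingOne (hasLeadingOne_X1 hn t)
  rw [Amat, mul_nonsing_inv_cancel_left _ _ (hdet ▸ isUnit_one)]

theorem X1_last_row (hn : 2 ≤ n) (t : ℕ → ℝ) :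
    X1 n t ⟨n - 1, by omega⟩ = Pi.single ⟨n - 1, by omega⟩ 1 := by
  obtain ⟨hone, hzero⟩ := hasLeadingOne_X1 hn t ⟨n - 1, by omega⟩
  ext q
  rcases (Fin.le_def.2 (by dsimp only; omega) : q ≤ ⟨n - 1, by omega⟩).lt_or_eq with hq | rfl
  · rw [hzero q hq, Pi.single_eq_of_ne hq.ne]
  · rw [hone, Pi.single_eq_same]

theorem Amat_last_row (hn : 2 ≤ n) (t : ℕ → ℝ) :
    Amat n t ⟨n - 1, by omega⟩ = X2 n t ⟨n - 1, by omega⟩ := by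
  rw [← X1_mul_Amat hn t, mul_apply_eq_vecMul, X1_last_row hn, single_one_vecMul]
  rfl

/-- The shape `e_n - c f_{n-1} + (terms in f_1, …, f_{n-2})` with `c ≥ 0` of a row vector in the
basis `e_1, …, e_n, f_1, …, f_n`. The vanishing of the coefficient of `f_n` is part of the invariant
because `x_{n-1}(t)` adds multiples of it to the coefficient of `f_{n-1}`. -/
structure IsLastRow (hn : 2 ≤ n) (v : Fin (2 * n) → ℝ) : Prop where
  hasLeadingOne : HasLeadingOne ⟨n - 1, by omega⟩ v
  coeff_last : v ⟨2 * n - 1, by omega⟩ = 0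
  coeff_pred_last : v ⟨2 * n - 2, by omega⟩ ≤ 0

theorem isLastRow_single (hn : 2 ≤ n) : IsLastRow hn (Pi.single ⟨n - 1, by omega⟩ 1) where
  hasLeadingOne := hasLeadingOne_single _
  coeff_last := Pi.single_eq_of_ne (by grind) 1
  coeff_pred_last := (Pi.single_eq_of_ne (by grind) 1).le

theorem IsLastRow.vecMul_xMat {hn : 2 ≤ n} {v : Fin (2 * n) → ℝ} (hv : IsLastRow hn v) {i : ℕ}
    (hi : 1 ≤ i) {s : ℝ} (hs : 0 ≤ s) : IsLastRow hn (v ᵥ* xMat n i s) := by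
  have hlead := hv.hasLeadingOne.vecMul_xMat hn (by dsimp only; omega) hi s
  have hone : v ⟨n - 1, by omega⟩ = 1 := hv.hasLeadingOne.1
  have hzero : v ⟨n - 2, by omega⟩ = 0 := hv.hasLeadingOne.2 _ (Fin.lt_def.2 (by dsimp only; omega))
  obtain ⟨-, hlast, hpred⟩ := hv
  rcases lt_or_ge i n with hin | hni
  · obtain ⟨i, rfl⟩ := Nat.exists_eq_add_of_le' hi
    refine ⟨hlead, ?_, ?_⟩ <;>
      simp only [vecMul_xMat_succ_of_lt hin, Pi.sub_apply, Pi.add_apply, Pi.single_apply,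
        Fin.ext_iff] <;>
      grind
  · refine ⟨hlead, ?_, ?_⟩ <;>
      simp only [vecMul_xMat_of_le hn hni, Pi.sub_apply, Pi.add_apply, Pi.single_apply,
        Fin.ext_iff, hone, hzero] <;>
      grind

theorem isLastRow_prodX (hn : 2 ≤ n) {t : ℕ → ℝ} (ht : ∀ l < Npar n, 0 < t l) :
    IsLastRow hn (prodX n t ⟨n - 1, by omega⟩) :=
  prodX_row_induction _ (isLastRow_single hn) fun l hl _ hi _ hv => hv.vecMul_xMat hi (ht l hl).le

theorem apply_last_pred_nonpos_of_mem_Spos (hn : 2 ≤ n) {A : Matrix (Fin n) (Fin n) ℝ}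
    (hA : A ∈ Spos n) : A ⟨n - 1, by omega⟩ ⟨n - 2, by omega⟩ ≤ 0 := by
  obtain ⟨t, ht, rfl⟩ := hA
  have entry_X2 : X2 n t ⟨n - 1, by omega⟩ ⟨n - 2, by omega⟩ =
      prodX n t ⟨n - 1, by omega⟩ ⟨2 * n - 2, by omega⟩ :=
    congrArg (prodX n t _) (Fin.ext (by dsimp only; omega))
  rw [Amat_last_row hn, entry_X2]
  exact (isLastRow_prodX hn ht).coeff_pred_last

theorem apply_last_pred_nonpos_of_mem_closure_Spos (hn : 2 ≤ n) {A : Matrix (Fin n) (Fin n) ℝ}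
    (hA : A ∈ closure (Spos n)) : A ⟨n - 1, by omega⟩ ⟨n - 2, by omega⟩ ≤ 0 := by
  have isClosed_halfSpace : IsClosed
      {B : Matrix (Fin n) (Fin n) ℝ | B ⟨n - 1, by omega⟩ ⟨n - 2, by omega⟩ ≤ 0} :=
    isClosed_le (by fun_prop) continuous_const
  exact closure_minimal (fun _ => apply_last_pred_nonpos_of_mem_Spos hn) isClosed_halfSpace hA

end LastRow

/-- The given `4 × 4` skew-symmetric matrix has all minors `M_{j,k}`
nonnegative but is not totally nonnegative. -/
theorem minors_nonneg_not_sufficient (A : Matrix (Fin 4) (Fin 4) ℝ)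
    (hA : A = !![0, 0, 0, 2; 0, 0, 0, 0; 0, 0, 0, -2; -2, 0, 2, 0]) :
    (∀ j k : ℕ, 1 ≤ j → j ≤ k → k ≤ 3 → 0 ≤ Mminor 4 j k A) ∧
      A ∉ closure (Spos 4) := by
  subst hA
  refine ⟨fun j k hj hjk hk => ?_, fun hmem => ?_⟩
  · rcases (hjk.trans hk).lt_or_eq with hj3 | rfl
    · refine (Mminor_eq_zero_of_forall_lt_pred (fun p q hp hq => ?_) hj hj3).ge
      fin_cases p <;> fin_cases q <;> simp_all
    · obtain rfl : k = 3 := le_antisymm hk hjk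
      norm_num [Mminor_self, Fin.last]
  · have entry_nonpos := apply_last_pred_nonpos_of_mem_closure_Spos (by norm_num) hmem
    norm_num at entry_nonpos
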